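/- arXiv:2010.10583 — 2 statements merged into one kernel-verified Lean document; each statement's English description precedes it below -/
import Mathlib

section
/- Let A be a finite alphabet, Q a probability mass function on A, n a positive integer, and P a probability mass function on Aⁿ with average single-letter marginal P̄. Suppose 0 < ξ ≤ 1/2 and D(P ‖ Qⁿ) ≤ n·ξ²/(2 ln 2). Then |H(P̄) − H(Q)| ≤ −ξ·log₂(ξ/|A|), and consequently H(P) ≤ n·( H(Q) + ξ·log₂(|A|/ξ) ). In particular, if W is uniformly distributed on {1,…,K} and W is a function of a random string A^n with pmf P, then log₂ K ≤ n·( H(Q) + ξ·log₂(|A|/ξ) ). -/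
/-- Entropy (base 2) of a pmf on a finite set. -/
noncomputable def entropy {Ω : Type*} [Fintype Ω] (P : Ω → ℝ) : ℝ :=
  -∑ a, P a * Real.logb 2 (P a)

/-- Informational divergence (base 2) of two pmfs on a finite set. -/
noncomputable def kl {Ω : Type*} [Fintype Ω] (P Q : Ω → ℝ) : ℝ :=
  ∑ a, P a * Real.logb 2 (P a / Q a)

/-- The n-fold product pmf on strings of length `n`. -/
noncomputable def prodPmf {A : Type*} [Fintype A] (Q : A → ℝ) (n : ℕ) :
    (Fin n → A) → ℝ :=
  fun x => ∏ i, Q (x i)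

/-- The average single-letter marginal `P̄(a) = (1/n)·∑ᵢ P_i(a)` of a pmf on `Aⁿ`. -/
noncomputable def avgMarginal {A : Type*} [Fintype A] [DecidableEq A] (n : ℕ)
    (P : (Fin n → A) → ℝ) : A → ℝ :=
  fun a => (1 / (n : ℝ)) *
    ∑ i : Fin n, ∑ x ∈ Finset.univ.filter (fun x : Fin n → A => x i = a), P x

/-!
The divergence splits as `D(P ‖ Qⁿ) = D(P ‖ P̄ⁿ) + n D(P̄ ‖ Q)`, and
`D(P ‖ P̄ⁿ) = n H(P̄) - H(P)`. Both terms being nonnegative, `H(P) ≤ n H(P̄)` and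
`D(P̄ ‖ Q) ≤ ξ² / (2 ln 2)`, so Pinsker's inequality gives `∑ |P̄ - Q| ≤ ξ`.

Entropy is uniformly continuous in the total variation distance `T`. Writing
`p = p ⊓ q + (p - p ⊓ q)`, subadditivity of `η(x) = -x log x` gives
`H(p) ≤ ∑ η(p ⊓ q) + ∑ η(p - p ⊓ q)`. By the log-sum inequality the first sum is at most
`H(q) + η(1 - T)` and the second at most `η(T) + T log (|A| - 1)`. Hence
`H(p) - H(q) ≤ h(T) + T log (|A| - 1)`, which for `T ≤ ξ / 2 ≤ 1 / 2` is at most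
`-ξ log (ξ / |A|)` because `|A| - 1 ≤ (|A| / 2)²`.
-/

open Real InformationTheory Finset

section LogSum

lemma mul_klFun_div {p q : ℝ} (hpq : q = 0 → p = 0) :
    q * klFun (p / q) = p * log (p / q) + q - p := by
  rcases eq_or_ne q 0 with hq | hq
  · simp [hq, hpq hq]
  · rw [klFun_apply]
    field_simp

lemma sum_mul_log_sum_div_sum_le {ι : Type*} {s : Finset ι} {f g : ι → ℝ}
    (hf : ∀ i ∈ s, 0 ≤ f i) (hg : ∀ i ∈ s, 0 ≤ g i) (hfg : ∀ i ∈ s, g i = 0 → f i = 0) :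
    (∑ i ∈ s, f i) * log ((∑ i ∈ s, f i) / ∑ i ∈ s, g i) ≤ ∑ i ∈ s, f i * log (f i / g i) := by
  rcases (sum_nonneg hf).eq_or_lt with hF | hF
  · have hzero := (sum_eq_zero_iff_of_nonneg hf).1 hF.symm
    rw [← hF, zero_mul, sum_eq_zero fun i hi ↦ by rw [hzero i hi, zero_mul]]
  have hG : 0 < ∑ i ∈ s, g i := by
    obtain ⟨i, hi, hfi⟩ := exists_ne_zero_of_sum_ne_zero hF.ne'
    exact sum_pos' hg ⟨i, hi, (hg i hi).lt_of_ne' (mt (hfg i hi) hfi)⟩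
  set c := (∑ i ∈ s, f i) / ∑ i ∈ s, g i
  have hcpos : 0 < c := div_pos hF hG
  have hterm : ∀ i ∈ s, f i * log c + (f i - c * g i) ≤ f i * log (f i / g i) := fun i hi ↦ by
    have hnonneg : 0 ≤ c * g i * klFun (f i / (c * g i)) :=
      mul_nonneg (mul_nonneg hcpos.le (hg i hi))
        (klFun_nonneg (div_nonneg (hf i hi) (mul_nonneg hcpos.le (hg i hi))))
    rw [mul_klFun_div fun h ↦ hfg i hi ((mul_eq_zero.1 h).resolve_left hcpos.ne')] at hnonneg
    have hlog : f i * log (f i / (c * g i)) = f i * log (f i / g i) - f i * log c := by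
      rcases eq_or_ne (f i) 0 with hfi | hfi
      · simp [hfi]
      · have hgi : g i ≠ 0 := mt (hfg i hi) hfi
        rw [mul_comm c, ← div_div, log_div (div_ne_zero hfi hgi) hcpos.ne', mul_sub]
    linarith
  have hcancel : c * ∑ i ∈ s, g i = ∑ i ∈ s, f i := div_mul_cancel₀ _ hG.ne'
  have hsum := sum_le_sum hterm
  rw [sum_add_distrib, sum_sub_distrib, ← sum_mul, ← mul_sum, hcancel] at hsum
  linarith

end LogSum

section NegMulLog

lemma negMulLog_sum_le_sum_negMulLog {ι : Type*} {s : Finset ι} {f : ι → ℝ}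
    (hf : ∀ i ∈ s, 0 ≤ f i) : negMulLog (∑ i ∈ s, f i) ≤ ∑ i ∈ s, negMulLog (f i) := by
  rw [negMulLog, neg_mul, sum_mul, ← sum_neg_distrib]
  refine sum_le_sum fun i hi ↦ ?_
  rcases (hf i hi).eq_or_lt with hfi | hfi
  · simp [← hfi]
  · rw [negMulLog, neg_mul]
    gcongr
    exact single_le_sum hf hi

lemma negMulLog_add_le {x y : ℝ} (hx : 0 ≤ x) (hy : 0 ≤ y) :
    negMulLog (x + y) ≤ negMulLog x + negMulLog y := by
  simpa using negMulLog_sum_le_sum_negMulLog (s := univ) (f := ![x, y])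
    (by simp [Fin.forall_fin_two, hx, hy])

lemma sum_negMulLog_le {ι : Type*} {s : Finset ι} (hs : s.Nonempty) {f : ι → ℝ}
    (hf : ∀ i ∈ s, 0 ≤ f i) :
    ∑ i ∈ s, negMulLog (f i) ≤ negMulLog (∑ i ∈ s, f i) + (∑ i ∈ s, f i) * log #s := by
  have hlogsum := sum_mul_log_sum_div_sum_le hf (g := fun _ ↦ 1) (by simp) (by simp)
  have hcard : (#s : ℝ) ≠ 0 := by exact_mod_cast hs.card_ne_zero
  have hsplit : (∑ i ∈ s, f i) * log ((∑ i ∈ s, f i) / #s) =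
      (∑ i ∈ s, f i) * log (∑ i ∈ s, f i) - (∑ i ∈ s, f i) * log #s := by
    rcases eq_or_ne (∑ i ∈ s, f i) 0 with hF | hF
    · simp [hF]
    · rw [log_div hF hcard, mul_sub]
  simp only [sum_const, nsmul_eq_mul, mul_one, div_one, hsplit] at hlogsum
  simp only [negMulLog, neg_mul, sum_neg_distrib]
  linarith

lemma sum_negMulLog_le_add_negMulLog_sum_of_le {ι : Type*} [Fintype ι] {m q : ι → ℝ}
    (hq : q ∈ stdSimplex ℝ ι) (hm : ∀ i, 0 ≤ m i) (hmq : ∀ i, m i ≤ q i) :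
    ∑ i, negMulLog (m i) ≤ ∑ i, negMulLog (q i) + negMulLog (∑ i, m i) := by
  have hac : ∀ i, q i = 0 → m i = 0 := fun i hi ↦ le_antisymm (hi ▸ hmq i) (hm i)
  have hlogsum := sum_mul_log_sum_div_sum_le (s := univ) (fun i _ ↦ hm i) (fun i _ ↦ hq.1 i)
    (fun i _ ↦ hac i)
  have hterm : ∀ i, m i * log (m i / q i) ≤ negMulLog (q i) - negMulLog (m i) := fun i ↦ by
    rcases (hm i).eq_or_lt with hmi | hmi
    · simpa [← hmi] using negMulLog_nonneg (hq.1 i) (mem_Icc_of_mem_stdSimplex hq i).2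
    · rw [log_div hmi.ne' (hmi.trans_le (hmq i)).ne', negMulLog, negMulLog]
      nlinarith [mul_le_mul_of_nonpos_right (hmq i)
        (log_nonpos (hq.1 i) (mem_Icc_of_mem_stdSimplex hq i).2)]
  have hsum := hlogsum.trans (sum_le_sum fun i _ ↦ hterm i)
  rw [hq.2, div_one, sum_sub_distrib] at hsum
  rw [negMulLog, neg_mul]
  linarith

-- Bernoulli's inequality `(1 + (t - 1)) ^ r ≤ 1 + r (t - 1)` with `r = t / (1 - t) ≤ 1`.
lemma negMulLog_one_sub_le {t : ℝ} (ht₀ : 0 < t) (ht : t ≤ 1 / 2) :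
    negMulLog (1 - t) ≤ negMulLog t := by
  have hpos : 0 < 1 - t := by linarith
  have hbernoulli : t ^ (t / (1 - t)) ≤ 1 - t := by
    have h := rpow_one_add_le_one_add_mul_self (s := t - 1) (p := t / (1 - t)) (by linarith)
      (by positivity) (by rw [div_le_one hpos]; linarith)
    have hright : 1 + t / (1 - t) * (t - 1) = 1 - t := by field_simp; ring
    rwa [add_sub_cancel, hright] at h
  have hlog := log_le_log (by positivity) hbernoulli
  rw [log_rpow ht₀, div_mul_eq_mul_div, div_le_iff₀' hpos] at hlog
  rw [negMulLog, negMulLog]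
  linarith

end NegMulLog

section Divergence

variable {A : Type*} [Fintype A] {p q : A → ℝ}

lemma kl_eq_neg_entropy_sub (hpq : ∀ a, q a = 0 → p a = 0) :
    kl p q = -entropy p - ∑ a, p a * logb 2 (q a) := by
  rw [kl, entropy, neg_neg, ← sum_sub_distrib]
  refine sum_congr rfl fun a _ ↦ ?_
  rcases eq_or_ne (p a) 0 with hpa | hpa
  · simp [hpa]
  · rw [logb_div hpa (mt (hpq a) hpa), mul_sub]

lemma log_two_mul_kl (hp : ∑ a, p a = 1) (hq : ∑ a, q a = 1) (hpq : ∀ a, q a = 0 → p a = 0) :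
    log 2 * kl p q = ∑ a, q a * klFun (p a / q a) := by
  have hlog2 : log 2 ≠ 0 := (log_pos one_lt_two).ne'
  simp only [mul_klFun_div (hpq _), sum_sub_distrib, sum_add_distrib, hp, hq, kl, mul_sum]
  rw [add_sub_cancel_right]
  refine sum_congr rfl fun a _ ↦ ?_
  rw [logb]
  field_simp

lemma kl_nonneg (hp : p ∈ stdSimplex ℝ A) (hq : q ∈ stdSimplex ℝ A)
    (hpq : ∀ a, q a = 0 → p a = 0) : 0 ≤ kl p q := by
  refine nonneg_of_mul_nonneg_right (a := log 2) ?_ (log_pos one_lt_two)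
  rw [log_two_mul_kl hp.2 hq.2 hpq]
  exact sum_nonneg fun a _ ↦ mul_nonneg (hq.1 a) (klFun_nonneg (div_nonneg (hp.1 a) (hq.1 a)))

end Divergence

section TotalVariation

variable {A : Type*} [Fintype A] {p q : A → ℝ}

/-- The total variation distance of two pmfs on a finite set, normalized to lie in `[0, 1]`. -/
noncomputable def tvDist (p q : A → ℝ) : ℝ :=
  (∑ a, |p a - q a|) / 2

lemma tvDist_comm (p q : A → ℝ) : tvDist p q = tvDist q p := by
  simp only [tvDist, abs_sub_comm]

lemma tvDist_nonneg (p q : A → ℝ) : 0 ≤ tvDist p q :=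
  div_nonneg (sum_nonneg fun _ _ ↦ abs_nonneg _) zero_le_two

lemma sum_inf_eq_one_sub_tvDist (hp : ∑ a, p a = 1) (hq : ∑ a, q a = 1) :
    ∑ a, p a ⊓ q a = 1 - tvDist p q := by
  simp only [inf_eq_half_smul_add_sub_abs_sub ℝ, smul_eq_mul, ← mul_sum, sum_sub_distrib,
    sum_add_distrib, hp, hq, abs_sub_comm (q _), tvDist, invOf_eq_inv]
  ring

end TotalVariation

section Pinsker

lemma hasDerivAt_log_sub_div {x : ℝ} (hx : 0 < x) :
    HasDerivAt (fun x : ℝ ↦ log x - (x - 1) * (5 * x + 1) / (2 * x * (x + 2)))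
      ((x - 1) ^ 3 / (x ^ 2 * (x + 2) ^ 2)) x := by
  have hnum : HasDerivAt (fun x : ℝ ↦ (x - 1) * (5 * x + 1))
      (1 * (5 * x + 1) + (x - 1) * (5 * 1)) x :=
    ((hasDerivAt_id x).sub_const 1).mul (((hasDerivAt_id x).const_mul 5).add_const 1)
  have hden : HasDerivAt (fun x : ℝ ↦ 2 * x * (x + 2)) (2 * 1 * (x + 2) + 2 * x * 1) x :=
    ((hasDerivAt_id x).const_mul 2).mul ((hasDerivAt_id x).add_const 2)
  refine ((hasDerivAt_log hx.ne').sub (hnum.div hden (by positivity))).congr_deriv ?_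
  field_simp
  ring

-- After multiplication by `x`, this is `3 (x - 1) ^ 2 / (2 (x + 2)) ≤ klFun x`.
lemma sub_one_mul_div_le_log {x : ℝ} (hx : 0 < x) :
    (x - 1) * (5 * x + 1) / (2 * x * (x + 2)) ≤ log x := by
  set f : ℝ → ℝ := fun x ↦ log x - (x - 1) * (5 * x + 1) / (2 * x * (x + 2))
  have hderiv {y : ℝ} (hy : 0 < y) := hasDerivAt_log_sub_div hy
  suffices hmin : f 1 ≤ f x by
    simpa [f] using hmin
  rcases le_total x 1 with hx1 | hx1
  · refine antitoneOn_of_hasDerivWithinAt_nonpos (convex_Ioc 0 1)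
      (fun y hy ↦ (hderiv hy.1).continuousAt.continuousWithinAt)
      (fun y hy ↦ (hderiv (interior_subset hy).1).hasDerivWithinAt)
      (fun y hy ↦ ?_) ⟨hx, hx1⟩ ⟨one_pos, le_rfl⟩ hx1
    have hy1 : y - 1 ≤ 0 := sub_nonpos.2 (interior_subset hy).2
    exact div_nonpos_of_nonpos_of_nonneg (Odd.pow_nonpos (by decide) hy1) (by positivity)
  · refine monotoneOn_of_hasDerivWithinAt_nonneg (convex_Ici 1)
      (fun y hy ↦ (hderiv (one_pos.trans_le hy)).continuousAt.continuousWithinAt)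
      (fun y hy ↦ (hderiv (one_pos.trans_le (interior_subset hy))).hasDerivWithinAt)
      (fun y hy ↦ ?_) Set.self_mem_Ici hx1 hx1
    have hy1 : 0 ≤ y - 1 := sub_nonneg.2 (interior_subset hy)
    positivity

lemma sq_sub_one_le_mul_klFun {x : ℝ} (hx : 0 ≤ x) :
    (x - 1) ^ 2 ≤ 2 / 3 * klFun x * (x + 2) := by
  rcases hx.eq_or_lt with rfl | hx
  · norm_num [klFun_zero]
  have hlog := sub_one_mul_div_le_log hx
  rw [div_le_iff₀ (by positivity)] at hlog
  rw [klFun_apply]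
  linarith

variable {A : Type*} [Fintype A] {p q : A → ℝ}

-- Pinsker's inequality, by Cauchy–Schwarz against the weights `p + 2 q`, whose total mass is `3`.
lemma two_mul_tvDist_sq_le_log_two_mul_kl (hp : p ∈ stdSimplex ℝ A) (hq : q ∈ stdSimplex ℝ A)
    (hpq : ∀ a, q a = 0 → p a = 0) : 2 * tvDist p q ^ 2 ≤ log 2 * kl p q := by
  have hpoint : ∀ a, |p a - q a| ^ 2 ≤
      2 / 3 * (q a * klFun (p a / q a)) * (p a + 2 * q a) := fun a ↦ by
    rw [sq_abs]
    rcases (hq.1 a).eq_or_lt with hqa | hqa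
    · simp [← hqa, hpq a hqa.symm]
    · calc (p a - q a) ^ 2 = q a ^ 2 * (p a / q a - 1) ^ 2 := by field_simp
        _ ≤ q a ^ 2 * (2 / 3 * klFun (p a / q a) * (p a / q a + 2)) := by
          gcongr
          exact sq_sub_one_le_mul_klFun (div_nonneg (hp.1 a) hqa.le)
        _ = 2 / 3 * (q a * klFun (p a / q a)) * (p a + 2 * q a) := by field_simp
  have hcs := sum_sq_le_sum_mul_sum_of_sq_le_mul univ
    (fun a _ ↦ mul_nonneg (by norm_num) (mul_nonneg (hq.1 a)
      (klFun_nonneg (div_nonneg (hp.1 a) (hq.1 a)))))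
    (fun a _ ↦ add_nonneg (hp.1 a) (mul_nonneg zero_le_two (hq.1 a))) (fun a _ ↦ hpoint a)
  rw [← mul_sum, sum_add_distrib, ← mul_sum, hp.2, hq.2, ← log_two_mul_kl hp.2 hq.2 hpq] at hcs
  rw [tvDist, div_pow]
  linarith

end Pinsker

section EntropyContinuity

lemma entropy_eq_sum_negMulLog_div {Ω : Type*} [Fintype Ω] (P : Ω → ℝ) :
    entropy P = (∑ a, negMulLog (P a)) / log 2 := by
  simp only [entropy, negMulLog, logb, neg_mul, sum_neg_distrib, neg_div, sum_div, mul_div_assoc]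

variable {A : Type*} [Fintype A] {p q : A → ℝ}

-- Some letter has `p a ≤ q a`, so `p - p ⊓ q` charges at most `|A| - 1` letters.
lemma sum_negMulLog_sub_inf_le [Nontrivial A] (hp : p ∈ stdSimplex ℝ A)
    (hq : q ∈ stdSimplex ℝ A) :
    ∑ a, negMulLog (p a - p a ⊓ q a) ≤
      negMulLog (tvDist p q) + tvDist p q * log (Fintype.card A - 1 : ℤ) := by
  classical
  have hsum : ∑ a, (p a - p a ⊓ q a) = tvDist p q := by
    rw [sum_sub_distrib, hp.2, sum_inf_eq_one_sub_tvDist hp.2 hq.2, sub_sub_cancel]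
  obtain ⟨a₀, -, ha₀⟩ : ∃ a ∈ univ, p a ≤ q a :=
    exists_le_of_sum_le univ_nonempty (hp.2.trans hq.2.symm).le
  have hzero : p a₀ - p a₀ ⊓ q a₀ = 0 := by rw [inf_eq_left.2 ha₀, sub_self]
  have hcard : ((#(univ.erase a₀) : ℕ) : ℝ) = (Fintype.card A - 1 : ℤ) := by
    rw [card_erase_of_mem (mem_univ a₀), card_univ, Nat.cast_pred Fintype.card_pos]
    push_cast
    rfl
  have hbound := sum_negMulLog_le (s := univ.erase a₀) (f := fun a ↦ p a - p a ⊓ q a)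
    (univ_nontrivial.erase_nonempty) (fun a _ ↦ sub_nonneg.2 inf_le_left)
  rwa [sum_erase _ (by rw [hzero, negMulLog_zero]),
    sum_erase (f := fun a ↦ p a - p a ⊓ q a) _ hzero, hsum, hcard] at hbound

lemma sum_negMulLog_sub_le_qaryEntropy [Nontrivial A] (hp : p ∈ stdSimplex ℝ A)
    (hq : q ∈ stdSimplex ℝ A) :
    ∑ a, negMulLog (p a) - ∑ a, negMulLog (q a) ≤
      qaryEntropy (Fintype.card A) (tvDist p q) := by
  have hinf_nonneg : ∀ a, 0 ≤ p a ⊓ q a := fun a ↦ le_inf (hp.1 a) (hq.1 a)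
  have hsubadd : ∑ a, negMulLog (p a) ≤
      ∑ a, negMulLog (p a ⊓ q a) + ∑ a, negMulLog (p a - p a ⊓ q a) := by
    rw [← sum_add_distrib]
    refine sum_le_sum fun a _ ↦ ?_
    simpa using negMulLog_add_le (hinf_nonneg a) (sub_nonneg.2 (inf_le_left (a := p a) (b := q a)))
  have hinf := sum_negMulLog_le_add_negMulLog_sum_of_le hq hinf_nonneg fun a ↦ inf_le_right
  rw [sum_inf_eq_one_sub_tvDist hp.2 hq.2] at hinf
  rw [qaryEntropy, binEntropy_eq_negMulLog_add_negMulLog_one_sub]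
  linarith [sum_negMulLog_sub_inf_le hp hq]

-- The sharp form of Fannes' inequality due to Audenaert.
theorem abs_entropy_sub_le_qaryEntropy [Nontrivial A] (hp : p ∈ stdSimplex ℝ A)
    (hq : q ∈ stdSimplex ℝ A) :
    |entropy p - entropy q| ≤ qaryEntropy (Fintype.card A) (tvDist p q) / log 2 := by
  have hlog2 : 0 < log 2 := log_pos one_lt_two
  rw [entropy_eq_sum_negMulLog_div, entropy_eq_sum_negMulLog_div, ← sub_div, abs_div,
    abs_of_pos hlog2]
  gcongr
  refine abs_sub_le_iff.2 ⟨sum_negMulLog_sub_le_qaryEntropy hp hq, ?_⟩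
  rw [tvDist_comm]
  exact sum_negMulLog_sub_le_qaryEntropy hq hp

lemma qaryEntropy_monotoneOn (k : ℕ) : MonotoneOn (qaryEntropy k) (Set.Icc 0 2⁻¹) :=
  fun _ hs _ ht hst ↦ add_le_add (mul_le_mul_of_nonneg_right hst (log_intCast_nonneg _))
    (binEntropy_strictMonoOn.monotoneOn hs ht hst)

-- `k - 1 ≤ (k / 2) ^ 2` absorbs the linear term, and `negMulLog (1 - t) ≤ negMulLog t` the rest.
lemma qaryEntropy_le_neg_mul_log {k : ℕ} (hk : 2 ≤ k) {t : ℝ} (ht₀ : 0 < t) (ht : t ≤ 1 / 2) :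
    qaryEntropy k t ≤ -(2 * t) * log (2 * t / k) := by
  have hk' : (2 : ℝ) ≤ k := by exact_mod_cast hk
  have hlog : log (k - 1 : ℤ) ≤ 2 * log (k / 2) := by
    rw [← Nat.cast_two (R := ℝ), ← log_pow]
    push_cast
    exact log_le_log (by linarith) (by nlinarith [sq_nonneg ((k : ℝ) - 2)])
  have hsplit : log (2 * t / k) = log t - log (k / 2) := by
    rw [← log_div ht₀.ne' (by positivity)]
    congr 1
    field_simp
  have hsymm := negMulLog_one_sub_le ht₀ ht
  rw [qaryEntropy, binEntropy_eq_negMulLog_add_negMulLog_one_sub, hsplit]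
  rw [negMulLog_def] at hsymm ⊢
  linarith [mul_le_mul_of_nonneg_left hlog ht₀.le]

theorem abs_entropy_sub_le_of_two_mul_tvDist_le (hp : p ∈ stdSimplex ℝ A)
    (hq : q ∈ stdSimplex ℝ A) {ξ : ℝ} (hξ₀ : 0 < ξ) (hξ : ξ ≤ 1) (hpq : 2 * tvDist p q ≤ ξ) :
    |entropy p - entropy q| ≤ -ξ * logb 2 (ξ / Fintype.card A) := by
  have hlog2 : 0 < log 2 := log_pos one_lt_two
  rcases subsingleton_or_nontrivial A with hA | hA
  · have : Nonempty A := by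
      by_contra h
      have := not_nonempty_iff.1 h
      simpa using hp.2
    rw [stdSimplex_unique, Set.mem_singleton_iff] at hp hq
    have hcard : Fintype.card A = 1 :=
      le_antisymm (Fintype.card_le_one_iff_subsingleton.2 hA) Fintype.card_pos
    have hlogb : logb 2 ξ ≤ 0 := logb_nonpos one_lt_two hξ₀.le hξ
    rw [hp, hq, sub_self, abs_zero, hcard, Nat.cast_one, div_one]
    nlinarith
  · calc |entropy p - entropy q|
        ≤ qaryEntropy (Fintype.card A) (tvDist p q) / log 2 := abs_entropy_sub_le_qaryEntropy hp hq
      _ ≤ qaryEntropy (Fintype.card A) (ξ / 2) / log 2 := by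
        gcongr
        exact qaryEntropy_monotoneOn _ ⟨tvDist_nonneg p q, by linarith⟩
          ⟨by linarith, by linarith⟩ (by linarith)
      _ ≤ -(2 * (ξ / 2)) * log (2 * (ξ / 2) / Fintype.card A) / log 2 := by
        gcongr
        exact qaryEntropy_le_neg_mul_log Fintype.one_lt_card (by linarith) (by linarith)
      _ = -ξ * logb 2 (ξ / Fintype.card A) := by
        rw [mul_div_cancel₀ ξ two_ne_zero, logb, mul_div_assoc]

end EntropyContinuity

section DeterministicFunction

lemma entropy_uniform (W : Type*) [Fintype W] :
    entropy (fun _ : W ↦ 1 / (Fintype.card W : ℝ)) = logb 2 (Fintype.card W) := by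
  rcases isEmpty_or_nonempty W <;> simp [entropy]

lemma entropy_map_le {Ω W : Type*} [Fintype Ω] [Fintype W] [DecidableEq W] {P : Ω → ℝ}
    (hP : ∀ x, 0 ≤ P x) (g : Ω → W) :
    entropy (fun w ↦ ∑ x with g x = w, P x) ≤ entropy P := by
  rw [entropy_eq_sum_negMulLog_div, entropy_eq_sum_negMulLog_div, ← sum_fiberwise univ g]
  gcongr
  exact negMulLog_sum_le_sum_negMulLog fun x _ ↦ hP x

end DeterministicFunction

section ProductPmf

variable {A : Type*} [Fintype A] {n : ℕ}

lemma prodPmf_mem_stdSimplex {q : A → ℝ} (hq : q ∈ stdSimplex ℝ A) (n : ℕ) :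
    prodPmf q n ∈ stdSimplex ℝ (Fin n → A) := by
  classical
  refine ⟨fun x ↦ prod_nonneg fun i _ ↦ hq.1 (x i), ?_⟩
  simp only [prodPmf, ← Fintype.piFinset_univ, ← prod_univ_sum, hq.2, prod_const_one]

variable [DecidableEq A] {P : (Fin n → A) → ℝ} {q : A → ℝ}

lemma sum_mul_sum_comp_eq_mul_sum_avgMarginal (P : (Fin n → A) → ℝ) (f : A → ℝ) :
    ∑ x, P x * ∑ i, f (x i) = n * ∑ a, avgMarginal n P a * f a := by
  rcases eq_or_ne n 0 with rfl | hn
  · simp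
  have hn' : (n : ℝ) ≠ 0 := by exact_mod_cast hn
  calc ∑ x, P x * ∑ i, f (x i)
      = ∑ i, ∑ x, P x * f (x i) := by simp only [mul_sum]; exact sum_comm
    _ = ∑ i : Fin n, ∑ a, ∑ x with x i = a, P x * f a := by
      refine sum_congr rfl fun i _ ↦ ?_
      rw [← sum_fiberwise univ (fun x : Fin n → A ↦ x i)]
      refine sum_congr rfl fun a _ ↦ sum_congr rfl fun x hx ↦ ?_
      rw [(mem_filter.1 hx).2]
    _ = n * ∑ a, avgMarginal n P a * f a := by
      rw [sum_comm, mul_sum]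
      refine sum_congr rfl fun a _ ↦ ?_
      rw [avgMarginal, ← mul_assoc, ← mul_assoc, mul_one_div_cancel hn', one_mul, sum_mul]
      simp only [sum_mul]

lemma avgMarginal_mem_stdSimplex (hn : n ≠ 0) (hP : P ∈ stdSimplex ℝ (Fin n → A)) :
    avgMarginal n P ∈ stdSimplex ℝ A := by
  have hn' : (n : ℝ) ≠ 0 := by exact_mod_cast hn
  refine ⟨fun a ↦ mul_nonneg (by positivity)
    (sum_nonneg fun i _ ↦ sum_nonneg fun x _ ↦ hP.1 x), mul_left_cancel₀ hn' ?_⟩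
  simpa [← sum_mul, hP.2] using (sum_mul_sum_comp_eq_mul_sum_avgMarginal P fun _ ↦ 1).symm

lemma eq_zero_of_prodPmf_avgMarginal_eq_zero (hP : ∀ x, 0 ≤ P x) {x : Fin n → A}
    (hx : prodPmf (avgMarginal n P) n x = 0) : P x = 0 := by
  obtain ⟨i, -, hi⟩ := prod_eq_zero_iff.1 hx
  have hn : (1 / n : ℝ) ≠ 0 := one_div_ne_zero (Nat.cast_ne_zero.2 i.pos.ne')
  have hmarginals := (mul_eq_zero.1 hi).resolve_left hn
  have hmarginal := (sum_eq_zero_iff_of_nonneg fun j _ ↦ sum_nonneg fun y _ ↦ hP y).1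
    hmarginals i (mem_univ i)
  exact (sum_eq_zero_iff_of_nonneg fun y _ ↦ hP y).1 hmarginal x (by simp)

lemma avgMarginal_eq_zero (hPq : ∀ x, prodPmf q n x = 0 → P x = 0) {a : A} (ha : q a = 0) :
    avgMarginal n P a = 0 := by
  refine mul_eq_zero_of_right _ (sum_eq_zero fun i _ ↦ sum_eq_zero fun x hx ↦ hPq x ?_)
  exact prod_eq_zero (mem_univ i) (by rw [(mem_filter.1 hx).2, ha])

lemma kl_prodPmf_eq_neg_entropy_sub (hPq : ∀ x, prodPmf q n x = 0 → P x = 0) :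
    kl P (prodPmf q n) = -entropy P - n * ∑ a, avgMarginal n P a * logb 2 (q a) := by
  rw [kl_eq_neg_entropy_sub hPq, ← sum_mul_sum_comp_eq_mul_sum_avgMarginal]
  congr 1
  refine sum_congr rfl fun x _ ↦ ?_
  rcases eq_or_ne (P x) 0 with hPx | hPx
  · simp [hPx]
  · rw [prodPmf, logb_prod _ _ (prod_ne_zero_iff.1 (mt (hPq x) hPx))]

lemma kl_prodPmf_avgMarginal (hP : ∀ x, 0 ≤ P x) :
    kl P (prodPmf (avgMarginal n P) n) = n * entropy (avgMarginal n P) - entropy P := by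
  rw [kl_prodPmf_eq_neg_entropy_sub fun _ ↦ eq_zero_of_prodPmf_avgMarginal_eq_zero hP]
  simp only [entropy]
  ring

lemma kl_prodPmf_eq_add (hP : ∀ x, 0 ≤ P x) (hPq : ∀ x, prodPmf q n x = 0 → P x = 0) :
    kl P (prodPmf q n) =
      kl P (prodPmf (avgMarginal n P) n) + n * kl (avgMarginal n P) q := by
  rw [kl_prodPmf_eq_neg_entropy_sub hPq, kl_prodPmf_avgMarginal hP,
    kl_eq_neg_entropy_sub fun _ ↦ avgMarginal_eq_zero hPq]
  ring

lemma kl_prodPmf_avgMarginal_nonneg (hn : n ≠ 0) (hP : P ∈ stdSimplex ℝ (Fin n → A)) :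
    0 ≤ kl P (prodPmf (avgMarginal n P) n) :=
  kl_nonneg hP (prodPmf_mem_stdSimplex (avgMarginal_mem_stdSimplex hn hP) n)
    fun _ ↦ eq_zero_of_prodPmf_avgMarginal_eq_zero hP.1

lemma entropy_le_mul_entropy_avgMarginal (hn : n ≠ 0) (hP : P ∈ stdSimplex ℝ (Fin n → A)) :
    entropy P ≤ n * entropy (avgMarginal n P) := by
  linarith [kl_prodPmf_avgMarginal_nonneg hn hP, kl_prodPmf_avgMarginal hP.1]

lemma mul_kl_avgMarginal_le (hn : n ≠ 0) (hP : P ∈ stdSimplex ℝ (Fin n → A))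
    (hPq : ∀ x, prodPmf q n x = 0 → P x = 0) :
    n * kl (avgMarginal n P) q ≤ kl P (prodPmf q n) := by
  linarith [kl_prodPmf_avgMarginal_nonneg hn hP, kl_prodPmf_eq_add hP.1 hPq]

lemma two_mul_tvDist_avgMarginal_le (hn : n ≠ 0) (hq : q ∈ stdSimplex ℝ A)
    (hP : P ∈ stdSimplex ℝ (Fin n → A)) (hPq : ∀ x, prodPmf q n x = 0 → P x = 0) {ξ : ℝ}
    (hξ : 0 ≤ ξ) (hdiv : kl P (prodPmf q n) ≤ n * ξ ^ 2 / (2 * log 2)) :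
    2 * tvDist (avgMarginal n P) q ≤ ξ := by
  have hn' : (0 : ℝ) < n := by exact_mod_cast hn.bot_lt
  have hletter : kl (avgMarginal n P) q ≤ ξ ^ 2 / (2 * log 2) := by
    refine le_of_mul_le_mul_left ?_ hn'
    rw [← mul_div_assoc]
    exact (mul_kl_avgMarginal_le hn hP hPq).trans hdiv
  refine le_of_sq_le_sq ?_ hξ
  calc (2 * tvDist (avgMarginal n P) q) ^ 2 = 2 * (2 * tvDist (avgMarginal n P) q ^ 2) := by ring
    _ ≤ 2 * (log 2 * kl (avgMarginal n P) q) := by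
      gcongr 2 * ?_
      exact two_mul_tvDist_sq_le_log_two_mul_kl (avgMarginal_mem_stdSimplex hn hP) hq
        fun _ ↦ avgMarginal_eq_zero hPq
    _ ≤ 2 * (log 2 * (ξ ^ 2 / (2 * log 2))) := by gcongr
    _ = ξ ^ 2 := by field_simp

end ProductPmf

-- `hPQ` encodes `D(P ‖ Qⁿ) < ∞`, which `kl` cannot express: off the support of `Qⁿ` its
-- summands take the junk value `P x * logb 2 (P x / 0) = 0`.
theorem rate_upper_bound_general {A : Type*} [Fintype A] [DecidableEq A] {n : ℕ} (hn : n ≠ 0)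
    {Q : A → ℝ} (hQ : Q ∈ stdSimplex ℝ A)
    {P : (Fin n → A) → ℝ} (hP : P ∈ stdSimplex ℝ (Fin n → A))
    (hPQ : ∀ x, prodPmf Q n x = 0 → P x = 0) {ξ : ℝ} (hξ₀ : 0 < ξ) (hξ₁ : ξ ≤ 1)
    (hdiv : kl P (prodPmf Q n) ≤ n * ξ ^ 2 / (2 * log 2)) :
    |entropy (avgMarginal n P) - entropy Q| ≤ -ξ * logb 2 (ξ / Fintype.card A)
    ∧ entropy P ≤ n * (entropy Q + ξ * logb 2 (Fintype.card A / ξ))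
    ∧ ∀ (K : ℕ) (g : (Fin n → A) → Fin K), (∀ w, ∑ x with g x = w, P x = 1 / (K : ℝ)) →
        logb 2 K ≤ n * (entropy Q + ξ * logb 2 (Fintype.card A / ξ)) := by
  have hcont : |entropy (avgMarginal n P) - entropy Q| ≤ -ξ * logb 2 (ξ / Fintype.card A) :=
    abs_entropy_sub_le_of_two_mul_tvDist_le (avgMarginal_mem_stdSimplex hn hP) hQ hξ₀ hξ₁
      (two_mul_tvDist_avgMarginal_le hn hQ hP hPQ hξ₀.le hdiv)
  have hrate : entropy P ≤ n * (entropy Q + ξ * logb 2 (Fintype.card A / ξ)) := by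
    refine (entropy_le_mul_entropy_avgMarginal hn hP).trans ?_
    rw [← inv_div, logb_inv]
    gcongr
    linarith [(abs_le.1 hcont).2]
  refine ⟨hcont, hrate, fun K g hg ↦ ?_⟩
  calc logb 2 K = entropy (fun w ↦ ∑ x with g x = w, P x) := by
        simpa [hg] using (entropy_uniform (Fin K)).symm
    _ ≤ entropy P := entropy_map_le hP.1 g
    _ ≤ n * (entropy Q + ξ * logb 2 (Fintype.card A / ξ)) := hrate

/-- If `0 < ξ ≤ 1/2` and `D(P ‖ Qⁿ) ≤ n·ξ²/(2 ln 2)`, then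
`|H(P̄) − H(Q)| ≤ −ξ·log₂(ξ/|A|)`, hence `H(P) ≤ n·(H(Q) + ξ·log₂(|A|/ξ))`; in
particular, if `W` is uniform on `{1,…,K}` and a function of `Aⁿ ~ P`, then
`log₂ K ≤ n·(H(Q) + ξ·log₂(|A|/ξ))`. -/
theorem rate_upper_bound {A : Type*} [Fintype A] [DecidableEq A]
    (n : ℕ) (hn : 0 < n)
    (Q : A → ℝ) (hQpos : ∀ a, 0 < Q a) (hQ1 : ∑ a, Q a = 1)
    (P : (Fin n → A) → ℝ) (hP0 : ∀ x, 0 ≤ P x) (hP1 : ∑ x, P x = 1)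
    (ξ : ℝ) (hξ0 : 0 < ξ) (hξ1 : ξ ≤ 1 / 2)
    (hdiv : kl P (prodPmf Q n) ≤ (n : ℝ) * ξ ^ 2 / (2 * Real.log 2)) :
    |entropy (avgMarginal n P) - entropy Q| ≤ -ξ * Real.logb 2 (ξ / Fintype.card A)
    ∧ entropy P ≤ (n : ℝ) * (entropy Q + ξ * Real.logb 2 ((Fintype.card A : ℝ) / ξ))
    ∧ ∀ K : ℕ, 0 < K → ∀ g : (Fin n → A) → Fin K,
        (∀ w, ∑ x ∈ Finset.univ.filter (fun x => g x = w), P x = 1 / (K : ℝ)) →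
        Real.logb 2 (K : ℝ)
          ≤ (n : ℝ) * (entropy Q + ξ * Real.logb 2 ((Fintype.card A : ℝ) / ξ)) := by
  have h := rate_upper_bound_general hn.ne' ⟨fun a ↦ (hQpos a).le, hQ1⟩ ⟨hP0, hP1⟩
    (fun x hx ↦ absurd hx (prod_pos fun i _ ↦ hQpos (x i)).ne') hξ0 (by linarith) hdiv
  exact ⟨h.1, h.2.1, fun K _ ↦ h.2.2 K⟩
end

section
/- Let A be a finite alphabet, Q a probability mass function on A, n a positive integer, and P a probability mass function on Aⁿ. Suppose 0 < ξ ≤ 1/2 and D(P ‖ Qⁿ) ≤ n·ξ²/(2 ln 2). Then H(P) ≥ n·( H(Q) − ξ·log₂(|A|/ξ) − ξ²/(2 ln 2) ). In particular, if A^n = f(W,Z) is a deterministic function of a pair (W,Z) with joint pmf P_{WZ} inducing output pmf P, then H(P_{WZ}) ≥ n·( H(Q) − ξ·log₂(|A|/ξ) − ξ²/(2 ln 2) ). -/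
/-!
By Donsker–Varadhan duality, `∑ P g ≤ D(P ‖ Qⁿ)` (in nats) for every `g` with `∑ Qⁿ exp g ≤ 1`.
For a letter function `h ≤ 0` with mean `μ` and second moment `s` under `Q`, the bound
`exp t ≤ 1 + t + t² / 2` for `t ≤ 0` shows that `g x = ∑ i, (h (x i) - μ - s / 2)` qualifies.
Rescaling `h` then gives `∑ P (∑ i, h (x i)) ≤ n (μ + ξ L)` whenever `D(P ‖ Qⁿ) ≤ n ξ² / 2` nats and
`s ≤ L²`. The theorem is the case `h = log Q`, `L = log (|A| / ξ)`, because
`H(P) = -D(P ‖ Qⁿ) - ∑ P log Qⁿ`; the second-moment bound `∑ Q (log Q)² ≤ L²` comes from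
`∑ Q exp (-log Q) ≤ |A| = ξ exp L`.
-/

open Real

section RealInequalities

lemma exp_le_quadratic_of_nonpos {x : ℝ} (hx : x ≤ 0) : exp x ≤ 1 + x + x ^ 2 / 2 := by
  have hquad : 1 - x + x ^ 2 / 2 ≤ exp (-x) := by
    simpa [sub_eq_add_neg] using quadratic_le_exp_of_nonneg (neg_nonneg.2 hx)
  have hpos : 0 < 1 + x + x ^ 2 / 2 := by nlinarith [sq_nonneg (x + 1)]
  calc exp x ≤ exp x * ((1 + x + x ^ 2 / 2) * (1 - x + x ^ 2 / 2)) :=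
        le_mul_of_one_le_right (exp_pos x).le (by nlinarith [sq_nonneg (x ^ 2)])
    _ ≤ exp x * ((1 + x + x ^ 2 / 2) * exp (-x)) := by gcongr
    _ = 1 + x + x ^ 2 / 2 := by rw [mul_left_comm, ← exp_add, add_neg_cancel, exp_zero, mul_one]

lemma mul_le_mul_log_div_add {p r : ℝ} (hp : 0 ≤ p) (hr : 0 ≤ r) (hac : r = 0 → p = 0) (t : ℝ) :
    p * t ≤ p * log (p / r) + (r * exp t - p) := by
  rcases hp.eq_or_lt with rfl | hp
  · simpa using mul_nonneg hr (exp_pos t).le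
  have hr : 0 < r := hr.lt_of_ne' fun h => hp.ne' (hac h)
  have hlog : log (r * exp t / p) = t - log (p / r) := by
    rw [log_div (by positivity) hp.ne', log_mul hr.ne' (exp_pos t).ne', log_exp,
      log_div hp.ne' hr.ne']
    ring
  calc p * t = p * log (p / r) + p * log (r * exp t / p) := by rw [hlog]; ring
    _ ≤ p * log (p / r) + p * (r * exp t / p - 1) := by
        gcongr
        exact log_le_sub_one_of_pos (by positivity)
    _ = p * log (p / r) + (r * exp t - p) := by field_simp

-- The coefficients are chosen so that `E[u²] ≤ L²` follows from `E[exp u] ≤ exp L / 2`.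
lemma sq_le_sq_sub_add_exp {u L : ℝ} (hu : 0 ≤ u) (hL : 2 / 3 ≤ L) :
    u ^ 2 ≤ L ^ 2 - L + 2 * L * exp (u - L) := by
  obtain ⟨d, rfl⟩ : ∃ d, u = L + d := ⟨u - L, by ring⟩
  rw [add_sub_cancel_left]
  suffices hd : d ^ 2 ≤ L * (2 * exp d - 1 - 2 * d) by linarith
  rcases le_total 0 d with hd | hd
  · have hcubic : 1 + d + d ^ 2 / 2 + d ^ 3 / 6 ≤ exp d := by
      simpa [Finset.sum_range_succ, Nat.factorial] using sum_le_exp_of_nonneg hd 4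
    have hexp : 3 / 2 * d ^ 2 ≤ 2 * exp d - 1 - 2 * d := by
      nlinarith [mul_nonneg hd (sq_nonneg (d - 1)), sq_nonneg (d - 1)]
    nlinarith [sq_nonneg d]
  · have hexp : -d ≤ 2 * exp d - 1 - 2 * d := by linarith [add_one_le_exp d, exp_pos d]
    calc d ^ 2 ≤ L * -d := by nlinarith
      _ ≤ L * (2 * exp d - 1 - 2 * d) := by gcongr

end RealInequalities

section EntropyAndDivergence

variable {Ω : Type*} [Fintype Ω] {P R : Ω → ℝ}

lemma entropy_mul_log_two (P : Ω → ℝ) : entropy P * log 2 = -∑ x, P x * log (P x) := by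
  simp only [entropy, logb, neg_mul, Finset.sum_mul, mul_assoc,
    div_mul_cancel₀ _ (log_pos one_lt_two).ne']

lemma kl_mul_log_two (P R : Ω → ℝ) : kl P R * log 2 = ∑ x, P x * log (P x / R x) := by
  simp only [kl, logb, Finset.sum_mul, mul_assoc, div_mul_cancel₀ _ (log_pos one_lt_two).ne']

lemma entropy_mul_log_two_eq_neg_kl_sub (hac : ∀ x, R x = 0 → P x = 0) :
    entropy P * log 2 = -(kl P R * log 2) - ∑ x, P x * log (R x) := by
  rw [entropy_mul_log_two, kl_mul_log_two, ← neg_add', ← Finset.sum_add_distrib]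
  congr 1
  refine Finset.sum_congr rfl fun x _ => ?_
  by_cases hP : P x = 0
  · simp [hP]
  · rw [log_div hP (mt (hac x) hP)]
    ring

lemma sum_mul_le_kl_mul_log_two (hP0 : ∀ x, 0 ≤ P x) (hP1 : ∑ x, P x = 1) (hR0 : ∀ x, 0 ≤ R x)
    (hac : ∀ x, R x = 0 → P x = 0) {g : Ω → ℝ} (hg : ∑ x, R x * exp (g x) ≤ 1) :
    ∑ x, P x * g x ≤ kl P R * log 2 :=
  calc ∑ x, P x * g x ≤ ∑ x, (P x * log (P x / R x) + (R x * exp (g x) - P x)) :=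
        Finset.sum_le_sum fun x _ => mul_le_mul_log_div_add (hP0 x) (hR0 x) (hac x) (g x)
    _ = kl P R * log 2 + (∑ x, R x * exp (g x) - 1) := by
        rw [Finset.sum_add_distrib, Finset.sum_sub_distrib, hP1, kl_mul_log_two]
    _ ≤ kl P R * log 2 := by linarith

lemma entropy_le_of_eq_sum_fiber {B : Type*} [Fintype B] [DecidableEq B] {S : B → ℝ}
    (hR0 : ∀ p, 0 ≤ R p) (f : Ω → B) (hS : ∀ x, S x = ∑ p with f p = x, R p) :
    entropy S ≤ entropy R := by
  refine le_of_mul_le_mul_right ?_ (log_pos one_lt_two)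
  rw [entropy_mul_log_two, entropy_mul_log_two, neg_le_neg_iff]
  have hle (p : Ω) : R p ≤ S (f p) := by
    rw [hS]
    exact Finset.single_le_sum (fun q _ => hR0 q) (by simp)
  calc ∑ p, R p * log (R p) ≤ ∑ p, R p * log (S (f p)) := by
        refine Finset.sum_le_sum fun p _ => ?_
        rcases (hR0 p).eq_or_lt with hp | hp
        · simp [← hp]
        · gcongr
          exact hle p
    _ = ∑ x, ∑ p with f p = x, R p * log (S (f p)) := (Finset.sum_fiberwise _ f _).symm
    _ = ∑ x, S x * log (S x) := by
        refine Finset.sum_congr rfl fun x _ => ?_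
        conv_rhs => rw [hS x, Finset.sum_mul, ← hS x]
        exact Finset.sum_congr rfl fun p hp => by rw [(Finset.mem_filter.1 hp).2]

end EntropyAndDivergence

section Letters

variable {A : Type*} [Fintype A] {Q : A → ℝ}

lemma nonempty_of_sum_eq_one (hQ1 : ∑ a, Q a = 1) : Nonempty A := by
  by_contra! hA
  simp at hQ1

lemma le_one_of_sum_eq_one (hQ0 : ∀ a, 0 ≤ Q a) (hQ1 : ∑ a, Q a = 1) (a : A) : Q a ≤ 1 :=
  hQ1 ▸ Finset.single_le_sum (fun b _ => hQ0 b) (Finset.mem_univ a)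

lemma sum_mul_exp_sub_le_one (hQ0 : ∀ a, 0 ≤ Q a) (hQ1 : ∑ a, Q a = 1) {h : A → ℝ}
    (hh : ∀ a, h a ≤ 0) :
    ∑ a, Q a * exp (h a - (∑ b, Q b * h b + (∑ b, Q b * h b ^ 2) / 2)) ≤ 1 := by
  set c := ∑ b, Q b * h b + (∑ b, Q b * h b ^ 2) / 2 with hc
  have hmgf : ∑ a, Q a * exp (h a) ≤ exp c :=
    calc ∑ a, Q a * exp (h a) ≤ ∑ a, Q a * (1 + h a + h a ^ 2 / 2) := by
          gcongr with a
          · exact hQ0 a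
          · exact exp_le_quadratic_of_nonpos (hh a)
      _ = c + 1 := by
          simp only [mul_add, mul_one, mul_div_assoc', Finset.sum_add_distrib, hQ1,
            ← Finset.sum_div, hc]
          ring
      _ ≤ exp c := add_one_le_exp c
  simp only [exp_sub, mul_div_assoc', ← Finset.sum_div]
  exact div_le_one_of_le₀ hmgf (exp_pos c).le

lemma log_two_le_log_card_div [Nonempty A] {ξ : ℝ} (hξ0 : 0 < ξ) (hξ1 : ξ ≤ 1 / 2) :
    log 2 ≤ log (Fintype.card A / ξ) := by
  have hcard : (1 : ℝ) ≤ Fintype.card A := mod_cast Fintype.card_pos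
  refine log_le_log two_pos ?_
  rw [le_div_iff₀ hξ0]
  linarith

lemma sum_mul_log_sq_le (hQ0 : ∀ a, 0 ≤ Q a) (hQ1 : ∑ a, Q a = 1) {ξ : ℝ} (hξ0 : 0 < ξ)
    (hξ1 : ξ ≤ 1 / 2) :
    ∑ a, Q a * log (Q a) ^ 2 ≤ log (Fintype.card A / ξ) ^ 2 := by
  have : Nonempty A := nonempty_of_sum_eq_one hQ1
  have hcard : (0 : ℝ) < Fintype.card A := mod_cast Fintype.card_pos
  set L := log (Fintype.card A / ξ) with hLdef
  have hL : 2 / 3 ≤ L := by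
    linarith [log_two_gt_d9, log_two_le_log_card_div (A := A) hξ0 hξ1]
  have hterm (a : A) :
      Q a * log (Q a) ^ 2 ≤ Q a * (L ^ 2 - L) + 2 * L * ξ / Fintype.card A := by
    rcases (hQ0 a).eq_or_lt with ha | ha
    · simpa [← ha] using by positivity
    have hexp : exp (-log (Q a) - L) = ξ / (Q a * Fintype.card A) := by
      rw [exp_sub, exp_neg, exp_log ha, hLdef, exp_log (by positivity)]
      field_simp
    have hlog : 0 ≤ -log (Q a) :=
      neg_nonneg.2 (log_nonpos ha.le (le_one_of_sum_eq_one hQ0 hQ1 a))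
    calc Q a * log (Q a) ^ 2
        ≤ Q a * (L ^ 2 - L + 2 * L * exp (-log (Q a) - L)) := by
          gcongr
          simpa using sq_le_sq_sub_add_exp hlog hL
      _ = Q a * (L ^ 2 - L) + 2 * L * ξ / Fintype.card A := by
          rw [hexp]
          field_simp
  calc ∑ a, Q a * log (Q a) ^ 2
      ≤ ∑ a, (Q a * (L ^ 2 - L) + 2 * L * ξ / Fintype.card A) :=
        Finset.sum_le_sum fun a _ => hterm a
    _ = L ^ 2 - L + 2 * L * ξ := by
        rw [Finset.sum_add_distrib, ← Finset.sum_mul, hQ1, one_mul, Finset.sum_const,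
          Finset.card_univ, nsmul_eq_mul, mul_div_cancel₀ _ hcard.ne']
    _ ≤ L ^ 2 := by nlinarith

end Letters

section ProductPmf

variable {A : Type*} [Fintype A] {n : ℕ} {Q : A → ℝ} {P : (Fin n → A) → ℝ}

lemma prodPmf_nonneg (hQ0 : ∀ a, 0 ≤ Q a) (x : Fin n → A) : 0 ≤ prodPmf Q n x :=
  Finset.prod_nonneg fun i _ => hQ0 (x i)

lemma sum_prodPmf_mul_exp_sum (Q h : A → ℝ) (n : ℕ) :
    ∑ x, prodPmf Q n x * exp (∑ i, h (x i)) = (∑ a, Q a * exp (h a)) ^ n := by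
  simp only [prodPmf, exp_sum, ← Finset.prod_mul_distrib, Fintype.sum_pow]

lemma sum_mul_sum_le_kl_mul_log_two_add (hQ0 : ∀ a, 0 ≤ Q a) (hQ1 : ∑ a, Q a = 1)
    (hP0 : ∀ x, 0 ≤ P x) (hP1 : ∑ x, P x = 1) (hac : ∀ x, prodPmf Q n x = 0 → P x = 0)
    {h : A → ℝ} (hh : ∀ a, h a ≤ 0) :
    ∑ x, P x * ∑ i, h (x i) ≤
      kl P (prodPmf Q n) * log 2 + n * (∑ a, Q a * h a + (∑ a, Q a * h a ^ 2) / 2) := by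
  set c := ∑ a, Q a * h a + (∑ a, Q a * h a ^ 2) / 2
  have hmgf : ∑ x, prodPmf Q n x * exp (∑ i, (h (x i) - c)) ≤ 1 := by
    rw [sum_prodPmf_mul_exp_sum Q (fun a => h a - c)]
    exact pow_le_one₀ (Finset.sum_nonneg fun a _ => mul_nonneg (hQ0 a) (exp_pos _).le)
      (sum_mul_exp_sub_le_one hQ0 hQ1 hh)
  have hdv := sum_mul_le_kl_mul_log_two hP0 hP1 (prodPmf_nonneg hQ0) hac hmgf
  simp only [Finset.sum_sub_distrib, Finset.sum_const, Finset.card_univ, Fintype.card_fin,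
    nsmul_eq_mul, mul_sub, ← Finset.sum_mul, hP1, one_mul] at hdv
  linarith

lemma sum_mul_sum_le_of_kl_le (hQ0 : ∀ a, 0 ≤ Q a) (hQ1 : ∑ a, Q a = 1)
    (hP0 : ∀ x, 0 ≤ P x) (hP1 : ∑ x, P x = 1) (hac : ∀ x, prodPmf Q n x = 0 → P x = 0)
    {ξ L : ℝ} (hξ : 0 < ξ) (hL : 0 < L) (hkl : kl P (prodPmf Q n) * log 2 ≤ n * (ξ ^ 2 / 2))
    {h : A → ℝ} (hh : ∀ a, h a ≤ 0) (hsq : ∑ a, Q a * h a ^ 2 ≤ L ^ 2) :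
    ∑ x, P x * ∑ i, h (x i) ≤ n * (∑ a, Q a * h a + ξ * L) := by
  have hl : 0 < ξ / L := div_pos hξ hL
  have hscaled := sum_mul_sum_le_kl_mul_log_two_add hQ0 hQ1 hP0 hP1 hac
    (h := fun a => ξ / L * h a) fun a => mul_nonpos_of_nonneg_of_nonpos hl.le (hh a)
  simp only [mul_pow, mul_left_comm _ (ξ / L), mul_left_comm _ ((ξ / L) ^ 2),
    ← Finset.mul_sum] at hscaled
  refine le_of_mul_le_mul_left ?_ hl
  calc ξ / L * ∑ x, P x * ∑ i, h (x i)
      ≤ kl P (prodPmf Q n) * log 2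
        + n * (ξ / L * ∑ a, Q a * h a + (ξ / L) ^ 2 * (∑ a, Q a * h a ^ 2) / 2) := hscaled
    _ ≤ n * (ξ ^ 2 / 2) + n * (ξ / L * ∑ a, Q a * h a + (ξ / L) ^ 2 * L ^ 2 / 2) := by gcongr
    _ = ξ / L * (n * (∑ a, Q a * h a + ξ * L)) := by
        field_simp
        ring

lemma sum_mul_log_prodPmf (hac : ∀ x, prodPmf Q n x = 0 → P x = 0) :
    ∑ x, P x * log (prodPmf Q n x) = ∑ x, P x * ∑ i, log (Q (x i)) := by
  refine Finset.sum_congr rfl fun x _ => ?_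
  by_cases hx : prodPmf Q n x = 0
  · simp [hac x hx]
  · rw [prodPmf, log_prod (Finset.prod_ne_zero_iff.1 hx)]

lemma entropy_ge_of_kl_prodPmf_le (hQ0 : ∀ a, 0 ≤ Q a) (hQ1 : ∑ a, Q a = 1)
    (hP0 : ∀ x, 0 ≤ P x) (hP1 : ∑ x, P x = 1) (hac : ∀ x, prodPmf Q n x = 0 → P x = 0)
    {ξ : ℝ} (hξ0 : 0 < ξ) (hξ1 : ξ ≤ 1 / 2)
    (hdiv : kl P (prodPmf Q n) ≤ n * ξ ^ 2 / (2 * log 2)) :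
    entropy P ≥ n * (entropy Q - ξ * logb 2 (Fintype.card A / ξ) - ξ ^ 2 / (2 * log 2)) := by
  have hlog2 : 0 < log 2 := log_pos one_lt_two
  have : Nonempty A := nonempty_of_sum_eq_one hQ1
  have hkl : kl P (prodPmf Q n) * log 2 ≤ n * (ξ ^ 2 / 2) :=
    (mul_le_mul_of_nonneg_right hdiv hlog2.le).trans_eq (by field_simp)
  have hcross := sum_mul_sum_le_of_kl_le hQ0 hQ1 hP0 hP1 hac hξ0
    (hlog2.trans_le (log_two_le_log_card_div hξ0 hξ1)) hkl
    (fun a => log_nonpos (hQ0 a) (le_one_of_sum_eq_one hQ0 hQ1 a))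
    (sum_mul_log_sq_le hQ0 hQ1 hξ0 hξ1)
  refine le_of_mul_le_mul_right ?_ hlog2
  calc n * (entropy Q - ξ * logb 2 (Fintype.card A / ξ) - ξ ^ 2 / (2 * log 2)) * log 2
      = n * (entropy Q * log 2 - ξ * log (Fintype.card A / ξ) - ξ ^ 2 / 2) := by
        rw [logb]
        field_simp
    _ ≤ -(kl P (prodPmf Q n) * log 2) - ∑ x, P x * log (prodPmf Q n x) := by
        rw [entropy_mul_log_two, sum_mul_log_prodPmf hac]
        linarith
    _ = entropy P * log 2 := (entropy_mul_log_two_eq_neg_kl_sub hac).symm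

end ProductPmf

theorem rate_lower_bound_general.{u, v} {A : Type u} [Fintype A] [DecidableEq A] (n : ℕ)
    (Q : A → ℝ) (hQ0 : ∀ a, 0 ≤ Q a) (hQ1 : ∑ a, Q a = 1)
    (P : (Fin n → A) → ℝ) (hP0 : ∀ x, 0 ≤ P x) (hP1 : ∑ x, P x = 1)
    (hac : ∀ x, prodPmf Q n x = 0 → P x = 0)
    (ξ : ℝ) (hξ0 : 0 < ξ) (hξ1 : ξ ≤ 1 / 2)
    (hdiv : kl P (prodPmf Q n) ≤ n * ξ ^ 2 / (2 * log 2)) :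
    entropy P ≥ n * (entropy Q - ξ * logb 2 (Fintype.card A / ξ) - ξ ^ 2 / (2 * log 2)) ∧
      ∀ (Ω : Type v) [Fintype Ω] (R : Ω → ℝ), (∀ p, 0 ≤ R p) →
        ∀ f : Ω → Fin n → A, (∀ x, P x = ∑ p with f p = x, R p) →
          entropy R ≥
            n * (entropy Q - ξ * logb 2 (Fintype.card A / ξ) - ξ ^ 2 / (2 * log 2)) := by
  have hbound := entropy_ge_of_kl_prodPmf_le hQ0 hQ1 hP0 hP1 hac hξ0 hξ1 hdiv
  exact ⟨hbound, fun Ω _ R hR0 f hP => hbound.trans (entropy_le_of_eq_sum_fiber hR0 f hP)⟩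

/-- If `0 < ξ ≤ 1/2` and `D(P ‖ Qⁿ) ≤ n·ξ²/(2 ln 2)`, then
`H(P) ≥ n·(H(Q) − ξ·log₂(|A|/ξ) − ξ²/(2 ln 2))`; in particular, if `Aⁿ = f(W,Z)`
is a deterministic function of a pair `(W,Z)` with joint pmf `P_{WZ}` inducing the
output pmf `P`, then `H(P_{WZ})` satisfies the same lower bound. -/
theorem rate_lower_bound {A : Type*} [Fintype A] [DecidableEq A]
    (n : ℕ) (hn : 0 < n)
    (Q : A → ℝ) (hQpos : ∀ a, 0 < Q a) (hQ1 : ∑ a, Q a = 1)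
    (P : (Fin n → A) → ℝ) (hP0 : ∀ x, 0 ≤ P x) (hP1 : ∑ x, P x = 1)
    (ξ : ℝ) (hξ0 : 0 < ξ) (hξ1 : ξ ≤ 1 / 2)
    (hdiv : kl P (prodPmf Q n) ≤ (n : ℝ) * ξ ^ 2 / (2 * Real.log 2)) :
    entropy P ≥ (n : ℝ) *
        (entropy Q - ξ * Real.logb 2 ((Fintype.card A : ℝ) / ξ)
          - ξ ^ 2 / (2 * Real.log 2))
    ∧ ∀ (W Z : Type) [Fintype W] [Fintype Z]
        (PWZ : W × Z → ℝ), (∀ p, 0 ≤ PWZ p) → (∑ p, PWZ p = 1) →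
        ∀ f : W → Z → (Fin n → A),
          (∀ x, P x = ∑ p ∈ Finset.univ.filter (fun p : W × Z => f p.1 p.2 = x), PWZ p) →
          entropy PWZ ≥ (n : ℝ) *
            (entropy Q - ξ * Real.logb 2 ((Fintype.card A : ℝ) / ξ)
              - ξ ^ 2 / (2 * Real.log 2)) := by
  obtain ⟨hP, hR⟩ := rate_lower_bound_general n Q (fun a => (hQpos a).le) hQ1 P hP0 hP1
    (fun x hx => absurd hx (Finset.prod_pos fun i _ => hQpos (x i)).ne') ξ hξ0 hξ1 hdiv
  exact ⟨hP, fun W Z _ _ PWZ hPWZ0 _ f hf => hR (W × Z) PWZ hPWZ0 (fun p => f p.1 p.2) hf⟩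
end
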